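/- arXiv:1206.1472 — 2 statements merged into one kernel-verified Lean document; each statement's English description precedes it below -/
import Mathlib

section
/- Assume (H1) and fix l ∈ ℝ^d; let L_l be a solution of L_l - L^*(L_l) = Σ_{i=1}^{2d} (e_i·l) A_i^* A_i - (m·l) I, and define f(ρ, x) = Re Tr(ρ L_l) + x·l. Let (ρ_n, X_n)_{n≥0} be the quantum trajectory process of the open quantum random walk, set ΔX_n = X_n - X_{n-1}, and define M_n = Σ_{k=2}^n ( f(ρ_k, ΔX_k) − (Pf)(ρ_{k-1}, ΔX_{k-1}) ) for n ≥ 2, where (Pf)(ρ, x) = Σ_{j=1}^{2d} Tr(A_j ρ A_j^*) f( A_j ρ A_j^*/Tr(A_j ρ A_j^*), e_j ) = Re Tr(ρ L_l) + m·l. Then (M_n)_{n≥2} is a centered martingale with respect to the filtration (F_n)_{n≥2}, where F_n = σ((ρ_k, X_k); k ≤ n). -/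
open MeasureTheory Filter Matrix Finset
open scoped ComplexOrder

noncomputable section

/-- The direction vectors `e_1, …, e_{2d}` in `ℤ^d`, with `e_{d+j} = -e_j`. -/
def dir (d : ℕ) (i : Fin (2 * d)) : Fin d → ℤ :=
  fun j => if (i : ℕ) < d then (if (j : ℕ) = (i : ℕ) then 1 else 0)
           else (if (j : ℕ) = (i : ℕ) - d then -1 else 0)

/-- The direction vectors viewed in `ℝ^d`. -/
def dirR (d : ℕ) (i : Fin (2 * d)) : Fin d → ℝ := fun j => (dir d i j : ℝ)

instance {k : ℕ} : MeasurableSpace (Matrix (Fin k) (Fin k) ℂ) := MeasurableSpace.pi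

/-- A density matrix: positive semidefinite with trace one. -/
def IsDensity {k : ℕ} (ρ : Matrix (Fin k) (Fin k) ℂ) : Prop := ρ.PosSemidef ∧ ρ.trace = 1

/-- The quantum trajectory process of the open quantum random walk. -/
structure IsQTraj {k d : ℕ} {Ω : Type} {mΩ : MeasurableSpace Ω}
    (A : Fin (2 * d) → Matrix (Fin k) (Fin k) ℂ)
    (μ : Measure Ω) (ℱ : Filtration ℕ mΩ)
    (ρ : ℕ → Ω → Matrix (Fin k) (Fin k) ℂ)
    (X : ℕ → Ω → Fin d → ℤ) : Prop where
  density : ∀ n, ∀ᵐ ω ∂μ, IsDensity (ρ n ω)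
  adapted_ρ : ∀ n, Measurable[ℱ n] (ρ n)
  adapted_X : ∀ n, Measurable[ℱ n] (X n)
  prob : ∀ (n : ℕ) (j : Fin (2 * d)),
    μ[(fun ω => if X (n + 1) ω = X n ω + dir d j then (1 : ℝ) else 0) | ℱ n]
      =ᵐ[μ] fun ω => ((A j * ρ n ω * (A j)ᴴ).trace).re
  update : ∀ (n : ℕ) (j : Fin (2 * d)), ∀ᵐ ω ∂μ,
    X (n + 1) ω = X n ω + dir d j →
      ρ (n + 1) ω = ((A j * ρ n ω * (A j)ᴴ).trace)⁻¹ • (A j * ρ n ω * (A j)ᴴ)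

/-- The drift vector `m = Σ_{i=1}^{2d} Tr(A_i ρ_∞ A_i^*) e_i ∈ ℝ^d`. -/
def mvec {k d : ℕ} (A : Fin (2 * d) → Matrix (Fin k) (Fin k) ℂ)
    (ρinf : Matrix (Fin k) (Fin k) ℂ) : Fin d → ℝ :=
  fun j => ∑ i, ((A i * ρinf * (A i)ᴴ).trace).re * dirR d i j

/-- The function `f(ρ, x) = Re Tr(ρ L_l) + x·l` solving the Poisson equation. -/
def fPoisson {k d : ℕ} (Ll : Matrix (Fin k) (Fin k) ℂ) (l : Fin d → ℝ)
    (ρ : Matrix (Fin k) (Fin k) ℂ) (x : Fin d → ℝ) : ℝ :=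
  ((ρ * Ll).trace).re + ∑ j, x j * l j

/-- The transition operator of the chain `(ρ_n, ΔX_n)` applied to `f`
(`(Pf)(ρ,x)` does not depend on `x`; terms with `Tr(A_j ρ A_j^*) = 0` are omitted,
since then `0⁻¹ • ... = 0` and the factor in front vanishes). -/
def Pf {k d : ℕ} (A : Fin (2 * d) → Matrix (Fin k) (Fin k) ℂ)
    (Ll : Matrix (Fin k) (Fin k) ℂ) (l : Fin d → ℝ)
    (ρ : Matrix (Fin k) (Fin k) ℂ) : ℝ :=
  ∑ i, ((A i * ρ * (A i)ᴴ).trace).re *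
    fPoisson Ll l (((A i * ρ * (A i)ᴴ).trace)⁻¹ • (A i * ρ * (A i)ᴴ)) (dirR d i)

/-!
The unit vectors `e_j` are distinct and the conditional probabilities `Tr(A_j ρ_n A_j^*)` of the
jumps add up to `Tr ρ_n = 1`, so the `2d` jump events partition the probability space up to a null
set. On the event of a jump by `e_j` the pair `(ρ_{n+1}, ΔX_{n+1})` is a function of `ρ_n`;
pulling this function out of the conditional expectation, event by event, gives
`E[f(ρ_{n+1}, ΔX_{n+1}) | F_n] = (Pf)(ρ_n)` for every measurable `f` that is integrable along the
trajectory. The sums of the differences `f(ρ_s, ΔX_s) - (Pf)(ρ_{s-1})` therefore form a martingale.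
For `f(ρ, x) = Re Tr(ρ L) + x·l` integrability is clear, as the entries of a positive semidefinite
matrix are bounded by its trace and the jumps take finitely many values.
-/

open scoped ProbabilityTheory

section ConditionalExpectation

variable {Ω ι : Type*} {m mΩ : MeasurableSpace Ω} {μ : Measure Ω}

theorem ae_mem_iUnion_of_sum_condProb_eq_one [IsProbabilityMeasure μ] [Fintype ι]
    {S : ι → Set Ω} (hm : m ≤ mΩ) (hS : ∀ i, MeasurableSet (S i))
    (hdisj : Pairwise (Function.onFun Disjoint S))
    (hsum : ∀ᵐ ω ∂μ, ∑ i, (μ⟦S i | m⟧) ω = 1) :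
    ∀ᵐ ω ∂μ, ω ∈ ⋃ i, S i := by
  have hmeas : μ.real (⋃ i, S i) = 1 := calc
    μ.real (⋃ i, S i) = ∑ i, μ.real (S i) := measureReal_iUnion_fintype hdisj hS
    _ = ∑ i, ∫ ω, (μ⟦S i | m⟧) ω ∂μ := by
      simp only [integral_condExp hm, integral_indicator_const _ (hS _), smul_eq_mul, mul_one]
    _ = ∫ ω, ∑ i, (μ⟦S i | m⟧) ω ∂μ :=
      (integral_finsetSum _ fun _ _ => integrable_condExp).symm
    _ = 1 := by simp [integral_congr_ae hsum]
  exact (mem_ae_iff_prob_eq_one (MeasurableSet.iUnion hS)).mpr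
    ((ENNReal.toReal_eq_one_iff _).mp hmeas)

theorem condExp_indicator_of_stronglyMeasurable [IsFiniteMeasure μ] {S : Set Ω} {g : Ω → ℝ}
    (hS : MeasurableSet S) (hg : StronglyMeasurable[m] g) (hint : Integrable (S.indicator g) μ) :
    μ[S.indicator g | m] =ᵐ[μ] μ⟦S | m⟧ * g := by
  have hmul : S.indicator g = S.indicator (fun _ => (1 : ℝ)) * g := by
    ext ω
    by_cases hω : ω ∈ S <;> simp [hω]
  rw [hmul] at hint ⊢
  exact condExp_mul_of_stronglyMeasurable_right hg hint ((integrable_const 1).indicator hS)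

theorem condExp_ae_eq_sum_condProb_mul [IsFiniteMeasure μ] [Fintype ι]
    {S : ι → Set Ω} {F : Ω → ℝ} {g : ι → Ω → ℝ} (hS : ∀ i, MeasurableSet (S i))
    (hdisj : Pairwise (Function.onFun Disjoint S)) (hcover : ∀ᵐ ω ∂μ, ω ∈ ⋃ i, S i)
    (hF : Integrable F μ) (hg : ∀ i, StronglyMeasurable[m] (g i))
    (hFg : ∀ i, ∀ᵐ ω ∂μ, ω ∈ S i → F ω = g i ω) :
    μ[F | m] =ᵐ[μ] fun ω => ∑ i, (μ⟦S i | m⟧) ω * g i ω := by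
  have hpiece (i : ι) : (S i).indicator F =ᵐ[μ] (S i).indicator (g i) := by
    filter_upwards [hFg i] with ω hω
    by_cases hmem : ω ∈ S i <;> simp [hmem, hω]
  have hint (i : ι) : Integrable ((S i).indicator (g i)) μ :=
    (hF.indicator (hS i)).congr (hpiece i)
  have hdecomp : F =ᵐ[μ] ∑ i, (S i).indicator (g i) := by
    filter_upwards [hcover, ae_all_iff.mpr hpiece] with ω hω hpieces
    obtain ⟨i, hi⟩ := Set.mem_iUnion.mp hω
    have hother (j : ι) (hji : j ≠ i) : ω ∉ S j :=
      fun hj => Set.disjoint_left.mp (hdisj hji) hj hi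
    rw [Finset.sum_apply, Fintype.sum_eq_single i fun j hj => by simp [hother j hj],
      ← hpieces i, Set.indicator_of_mem hi]
  refine (condExp_congr_ae hdecomp).trans
    ((condExp_finsetSum (fun i _ => hint i) m).trans ?_)
  filter_upwards [ae_all_iff.mpr fun i =>
    condExp_indicator_of_stronglyMeasurable (m := m) (hS i) (hg i) (hint i)] with ω hω
  simp only [Finset.sum_apply, hω, Pi.mul_apply]

theorem condExp_sub_ae_eq_zero {E : Type*} [NormedAddCommGroup E] [NormedSpace ℝ E]
    [CompleteSpace E] {Y Z : Ω → E} (hm : m ≤ mΩ) [SigmaFinite (μ.trim hm)]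
    (hY : Integrable Y μ) (hZ : StronglyMeasurable[m] Z) (hYZ : μ[Y | m] =ᵐ[μ] Z) :
    μ[Y - Z | m] =ᵐ[μ] 0 := by
  have hZint : Integrable Z μ := integrable_condExp.congr hYZ
  filter_upwards [condExp_sub hY hZint m, hYZ] with ω hsub hω
  simp [hsub, hω, condExp_of_stronglyMeasurable hm hZ hZint]

end ConditionalExpectation

section Martingales

variable {Ω E : Type*} {mΩ : MeasurableSpace Ω} {μ : Measure Ω}
  [NormedAddCommGroup E] [NormedSpace ℝ E] [CompleteSpace E]

theorem martingale_sum_Ioc_of_condExp_eq_zero [IsFiniteMeasure μ] {ℱ : Filtration ℕ mΩ}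
    {D : ℕ → Ω → E}
    (hadp : StronglyAdapted ℱ D) (hint : ∀ n, Integrable (D (n + 1)) μ)
    (hD : ∀ n, μ[D (n + 1) | ℱ n] =ᵐ[μ] 0) (a : ℕ) :
    Martingale (fun n => ∑ s ∈ Ioc a n, D s) ℱ μ := by
  refine martingale_of_condExp_sub_eq_zero_nat (fun n => ?_) (fun n => ?_) fun n => ?_
  · exact Finset.stronglyMeasurable_sum _ fun s hs =>
      (hadp s).mono (ℱ.mono (Finset.mem_Ioc.mp hs).2)
  · refine integrable_finsetSum' _ fun s hs => ?_
    obtain ⟨t, rfl⟩ := Nat.exists_eq_add_one.mpr (Nat.zero_lt_of_lt (Finset.mem_Ioc.mp hs).1)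
    exact hint t
  · rcases le_or_gt a n with han | hna
    · simpa only [Finset.sum_Ioc_succ_top han, add_sub_cancel_left] using hD n
    · simp [Finset.Ioc_eq_empty_of_le hna.le, Finset.Ioc_eq_empty_of_le (Nat.succ_le_of_lt hna)]

theorem integral_eq_zero_of_martingale {ι : Type*} [Preorder ι] {ℱ : Filtration ι mΩ}
    [SigmaFiniteFiltration μ ℱ] {M : ι → Ω → E} (hM : Martingale M ℱ μ) {i j : ι} (hij : i ≤ j)
    (hi : M i = 0) : ∫ ω, M j ω ∂μ = 0 := by
  simpa [hi] using (hM.setIntegral_eq hij MeasurableSet.univ).symm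

end Martingales

section PosSemidef

variable {n 𝕜 : Type*} [RCLike 𝕜] {σ : Matrix n n 𝕜}

theorem norm_apply_sq_le_re_diag_mul (hσ : σ.PosSemidef) (i j : n) :
    ‖σ i j‖ ^ 2 ≤ RCLike.re (σ i i) * RCLike.re (σ j j) := by
  have hdet := (RCLike.nonneg_iff.mp (hσ.submatrix ![i, j]).det_nonneg).1
  have hii := (RCLike.nonneg_iff.mp (hσ.diag_nonneg (i := i))).2
  have hji : σ j i = star (σ i j) := (hσ.isHermitian.apply j i).symm
  have hprod : RCLike.re (σ i j * σ j i) = ‖σ i j‖ ^ 2 := by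
    rw [hji, RCLike.star_def, RCLike.mul_conj]
    norm_cast
  simp only [Matrix.det_fin_two, Matrix.submatrix_apply, Matrix.cons_val_zero,
    Matrix.cons_val_one, map_sub, hprod, RCLike.mul_re, hii, zero_mul, sub_zero] at hdet
  exact sub_nonneg.mp hdet

variable [Fintype n]

theorem re_diag_le_re_trace (hσ : σ.PosSemidef) (i : n) :
    RCLike.re (σ i i) ≤ RCLike.re σ.trace := by
  rw [Matrix.trace, map_sum]
  exact Finset.single_le_sum
    (fun j _ => (RCLike.nonneg_iff.mp (hσ.diag_nonneg (i := j))).1) (Finset.mem_univ i)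

theorem norm_apply_le_re_trace (hσ : σ.PosSemidef) (i j : n) :
    ‖σ i j‖ ≤ RCLike.re σ.trace := by
  have hnonneg (a : n) : 0 ≤ RCLike.re (σ a a) :=
    (RCLike.nonneg_iff.mp (hσ.diag_nonneg (i := a))).1
  refine abs_le_of_sq_le_sq' ?_ ((hnonneg i).trans (re_diag_le_re_trace hσ i)) |>.2
  calc ‖σ i j‖ ^ 2 ≤ RCLike.re (σ i i) * RCLike.re (σ j j) := norm_apply_sq_le_re_diag_mul hσ i j
    _ ≤ RCLike.re σ.trace * RCLike.re σ.trace :=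
      mul_le_mul (re_diag_le_re_trace hσ i) (re_diag_le_re_trace hσ j) (hnonneg j)
        ((hnonneg i).trans (re_diag_le_re_trace hσ i))
    _ = RCLike.re σ.trace ^ 2 := (sq _).symm

theorem norm_trace_mul_le (hσ : σ.PosSemidef) (L : Matrix n n 𝕜) :
    ‖(σ * L).trace‖ ≤ RCLike.re σ.trace * ∑ i, ∑ j, ‖L j i‖ := by
  simp only [Matrix.trace, Matrix.diag, Matrix.mul_apply, Finset.mul_sum]
  refine norm_sum_le_of_le _ fun i _ => norm_sum_le_of_le _ fun j _ => ?_
  rw [norm_mul]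
  exact mul_le_mul_of_nonneg_right (norm_apply_le_re_trace hσ i j) (norm_nonneg _)

end PosSemidef

theorem dir_injective (d : ℕ) : Function.Injective (dir d) := by
  intro a b hab
  ext
  by_cases ha : (a : ℕ) < d
  · have hcoord := congrFun hab ⟨a, ha⟩
    simp only [dir, ha, if_true] at hcoord
    split_ifs at hcoord <;> omega
  · have hcoord := congrFun hab ⟨a - d, by omega⟩
    simp only [dir, ha, if_true, if_false] at hcoord
    split_ifs at hcoord
    omega

section Transition

variable {k d : ℕ}

/-- The probability `Tr(B σ B^*)` of the outcome with Kraus operator `B` in the state `σ`. -/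
def outcomeProb (B σ : Matrix (Fin k) (Fin k) ℂ) : ℝ := ((B * σ * Bᴴ).trace).re

/-- The state `B σ B^* / Tr(B σ B^*)` after the outcome with Kraus operator `B` has been observed
in the state `σ`; it is `0` when that outcome has probability zero. -/
def postState (B σ : Matrix (Fin k) (Fin k) ℂ) : Matrix (Fin k) (Fin k) ℂ :=
  ((B * σ * Bᴴ).trace)⁻¹ • (B * σ * Bᴴ)

/-- The transition operator of the chain `(ρ_n, ΔX_n)` applied to an arbitrary function `f`; the
result depends on the state only. For `f = fPoisson Ll l` it is `Pf A Ll l`. -/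
def transition (A : Fin (2 * d) → Matrix (Fin k) (Fin k) ℂ)
    (f : Matrix (Fin k) (Fin k) ℂ → (Fin d → ℝ) → ℝ) (σ : Matrix (Fin k) (Fin k) ℂ) : ℝ :=
  ∑ i, outcomeProb (A i) σ * f (postState (A i) σ) (dirR d i)

theorem sum_outcomeProb {A : Fin (2 * d) → Matrix (Fin k) (Fin k) ℂ}
    (hA : ∑ j, (A j)ᴴ * A j = 1) (σ : Matrix (Fin k) (Fin k) ℂ) :
    ∑ j, outcomeProb (A j) σ = σ.trace.re := by
  have hcycle (j : Fin (2 * d)) : (A j * σ * (A j)ᴴ).trace = ((A j)ᴴ * A j * σ).trace := by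
    rw [Matrix.trace_mul_comm, Matrix.mul_assoc]
  simp only [outcomeProb, hcycle]
  rw [← Complex.re_sum, ← Matrix.trace_sum, ← Finset.sum_mul, hA, one_mul]

instance : BorelSpace (Matrix (Fin k) (Fin k) ℂ) :=
  inferInstanceAs (BorelSpace (Fin k → Fin k → ℂ))

theorem measurable_outcomeProb (B : Matrix (Fin k) (Fin k) ℂ) : Measurable (outcomeProb B) := by
  have : Continuous (outcomeProb B) := by unfold outcomeProb; fun_prop
  exact this.measurable

theorem measurable_postState (B : Matrix (Fin k) (Fin k) ℂ) : Measurable (postState B) := by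
  have htrace : Measurable fun σ => (B * σ * Bᴴ).trace :=
    Continuous.measurable (by fun_prop)
  have hmul : Measurable fun σ => B * σ * Bᴴ := Continuous.measurable (by fun_prop)
  exact htrace.inv.smul hmul

theorem measurable_transition (A : Fin (2 * d) → Matrix (Fin k) (Fin k) ℂ)
    {f : Matrix (Fin k) (Fin k) ℂ → (Fin d → ℝ) → ℝ} (hf : Measurable (Function.uncurry f)) :
    Measurable (transition A f) :=
  Finset.measurable_sum _ fun i _ => (measurable_outcomeProb (A i)).mul
    (hf.comp ((measurable_postState (A i)).prodMk measurable_const))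

theorem measurable_uncurry_fPoisson (Ll : Matrix (Fin k) (Fin k) ℂ) (l : Fin d → ℝ) :
    Measurable (Function.uncurry (fPoisson Ll l)) := by
  have : Continuous (Function.uncurry (fPoisson Ll l)) := by
    unfold fPoisson Function.uncurry; fun_prop
  exact this.measurable

theorem norm_fPoisson_le (Ll : Matrix (Fin k) (Fin k) ℂ) (l : Fin d → ℝ)
    {σ : Matrix (Fin k) (Fin k) ℂ} (hσ : IsDensity σ) (x : Fin d → ℝ) :
    ‖fPoisson Ll l σ x‖ ≤ (∑ i, ∑ j, ‖Ll j i‖) + ‖∑ j, x j * l j‖ := by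
  have htrace : ‖(σ * Ll).trace‖ ≤ ∑ i, ∑ j, ‖Ll j i‖ := by
    simpa [hσ.2] using norm_trace_mul_le hσ.1 Ll
  exact (norm_add_le _ _).trans
    (add_le_add_left ((Complex.abs_re_le_norm _).trans htrace) _)

end Transition

section Trajectory

variable {k d : ℕ} {Ω : Type}

/-- The increment `ΔX_s = X_s - X_{s-1}`, viewed in `ℝ^d`; it is `0` at time `s = 0`, because
`0 - 1 = 0` in `ℕ`. -/
def increment (X : ℕ → Ω → Fin d → ℤ) (s : ℕ) (ω : Ω) : Fin d → ℝ :=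
  fun j => ((X s ω j - X (s - 1) ω j : ℤ) : ℝ)

/-- The event that the walk moves by `e_j` between the times `n` and `n + 1`. -/
def jumpEvent (X : ℕ → Ω → Fin d → ℤ) (n : ℕ) (j : Fin (2 * d)) : Set Ω :=
  {ω | X (n + 1) ω = X n ω + dir d j}

/-- The difference between `f(ρ_s, ΔX_s)` and `(Pf)(ρ_{s-1})`, its conditional expectation given
the past; these are the increments of the martingale. -/
def compensatedTerm (A : Fin (2 * d) → Matrix (Fin k) (Fin k) ℂ)
    (f : Matrix (Fin k) (Fin k) ℂ → (Fin d → ℝ) → ℝ) (ρ : ℕ → Ω → Matrix (Fin k) (Fin k) ℂ)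
    (X : ℕ → Ω → Fin d → ℤ) (s : ℕ) (ω : Ω) : ℝ :=
  f (ρ s ω) (increment X s ω) - transition A f (ρ (s - 1) ω)

theorem pairwise_disjoint_jumpEvent (X : ℕ → Ω → Fin d → ℤ) (n : ℕ) :
    Pairwise (Function.onFun Disjoint (jumpEvent X n)) := fun _ _ hij =>
  Set.disjoint_left.mpr fun _ hi hj =>
    hij (dir_injective d (add_left_cancel ((Eq.symm hi).trans hj)))

theorem increment_eq_dirR {X : ℕ → Ω → Fin d → ℤ} {n : ℕ} {j : Fin (2 * d)} {ω : Ω}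
    (hω : ω ∈ jumpEvent X n j) : increment X (n + 1) ω = dirR d j := by
  have hstep : X (n + 1) ω = X n ω + dir d j := hω
  ext i
  simp [increment, dirR, hstep]

variable {mΩ : MeasurableSpace Ω} {μ : Measure Ω} {ℱ : Filtration ℕ mΩ}
  {A : Fin (2 * d) → Matrix (Fin k) (Fin k) ℂ}
  {ρ : ℕ → Ω → Matrix (Fin k) (Fin k) ℂ} {X : ℕ → Ω → Fin d → ℤ}
  {f : Matrix (Fin k) (Fin k) ℂ → (Fin d → ℝ) → ℝ}

namespace IsQTraj

theorem measurable_increment (hQT : IsQTraj A μ ℱ ρ X) (s : ℕ) :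
    Measurable[ℱ s] (increment X s) := by
  have hprev : Measurable[ℱ s] (X (s - 1)) :=
    (hQT.adapted_X (s - 1)).mono (ℱ.mono (Nat.sub_le s 1)) le_rfl
  exact (measurable_of_countable fun z : Fin d → ℤ => fun j => (z j : ℝ)).comp
    ((hQT.adapted_X s).sub hprev)

theorem measurableSet_jumpEvent (hQT : IsQTraj A μ ℱ ρ X) (n : ℕ) (j : Fin (2 * d)) :
    MeasurableSet (jumpEvent X n j) :=
  measurableSet_eq_fun ((hQT.adapted_X (n + 1)).mono (ℱ.le _) le_rfl)
    (((hQT.adapted_X n).mono (ℱ.le _) le_rfl).add_const _)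

theorem condProb_jumpEvent (hQT : IsQTraj A μ ℱ ρ X) (n : ℕ) (j : Fin (2 * d)) :
    μ⟦jumpEvent X n j | ℱ n⟧ =ᵐ[μ] fun ω => outcomeProb (A j) (ρ n ω) := by
  have hind : (jumpEvent X n j).indicator (fun _ => (1 : ℝ)) =
      fun ω => if X (n + 1) ω = X n ω + dir d j then 1 else 0 := by
    ext ω
    simp [jumpEvent, Set.indicator_apply]
  rw [hind]
  exact hQT.prob n j

theorem stronglyMeasurable_state_increment (hQT : IsQTraj A μ ℱ ρ X)
    (hf : Measurable (Function.uncurry f)) (s : ℕ) :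
    StronglyMeasurable[ℱ s] fun ω => f (ρ s ω) (increment X s ω) :=
  (hf.comp ((hQT.adapted_ρ s).prodMk (hQT.measurable_increment s))).stronglyMeasurable

theorem ae_mem_iUnion_jumpEvent [IsProbabilityMeasure μ] (hA : ∑ j, (A j)ᴴ * A j = 1)
    (hQT : IsQTraj A μ ℱ ρ X) (n : ℕ) : ∀ᵐ ω ∂μ, ω ∈ ⋃ j, jumpEvent X n j := by
  refine ae_mem_iUnion_of_sum_condProb_eq_one (ℱ.le n) (hQT.measurableSet_jumpEvent n)
    (pairwise_disjoint_jumpEvent X n) ?_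
  filter_upwards [hQT.density n, ae_all_iff.mpr (hQT.condProb_jumpEvent n)] with ω hρ hprob
  simp only [hprob, sum_outcomeProb hA, hρ.2, Complex.one_re]

theorem condExp_ae_eq_transition [IsProbabilityMeasure μ] (hA : ∑ j, (A j)ᴴ * A j = 1)
    (hQT : IsQTraj A μ ℱ ρ X) (hf : Measurable (Function.uncurry f)) {n : ℕ}
    (hint : Integrable (fun ω => f (ρ (n + 1) ω) (increment X (n + 1) ω)) μ) :
    μ[fun ω => f (ρ (n + 1) ω) (increment X (n + 1) ω) | ℱ n]
      =ᵐ[μ] fun ω => transition A f (ρ n ω) := by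
  have hpost (j : Fin (2 * d)) :
      StronglyMeasurable[ℱ n] fun ω => f (postState (A j) (ρ n ω)) (dirR d j) :=
    (hf.comp (((measurable_postState (A j)).comp (hQT.adapted_ρ n)).prodMk
      measurable_const)).stronglyMeasurable
  have hjump (j : Fin (2 * d)) : ∀ᵐ ω ∂μ, ω ∈ jumpEvent X n j →
      f (ρ (n + 1) ω) (increment X (n + 1) ω) = f (postState (A j) (ρ n ω)) (dirR d j) := by
    filter_upwards [hQT.update n j] with ω hupdate hω
    rw [increment_eq_dirR hω, hupdate hω, postState]
  refine (condExp_ae_eq_sum_condProb_mul (hQT.measurableSet_jumpEvent n)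
    (pairwise_disjoint_jumpEvent X n) (hQT.ae_mem_iUnion_jumpEvent hA n) hint hpost hjump).trans ?_
  filter_upwards [ae_all_iff.mpr (hQT.condProb_jumpEvent n)] with ω hprob
  simp only [hprob, transition]

theorem integrable_transition [IsProbabilityMeasure μ] (hA : ∑ j, (A j)ᴴ * A j = 1)
    (hQT : IsQTraj A μ ℱ ρ X) (hf : Measurable (Function.uncurry f)) {n : ℕ}
    (hint : Integrable (fun ω => f (ρ (n + 1) ω) (increment X (n + 1) ω)) μ) :
    Integrable (fun ω => transition A f (ρ n ω)) μ :=
  integrable_condExp.congr (hQT.condExp_ae_eq_transition hA hf hint)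

theorem stronglyMeasurable_transition (hQT : IsQTraj A μ ℱ ρ X)
    (hf : Measurable (Function.uncurry f)) (n : ℕ) :
    StronglyMeasurable[ℱ n] fun ω => transition A f (ρ n ω) :=
  ((measurable_transition A hf).comp (hQT.adapted_ρ n)).stronglyMeasurable

theorem stronglyMeasurable_compensatedTerm (hQT : IsQTraj A μ ℱ ρ X)
    (hf : Measurable (Function.uncurry f)) (s : ℕ) :
    StronglyMeasurable[ℱ s] (compensatedTerm A f ρ X s) :=
  (hQT.stronglyMeasurable_state_increment hf s).sub
    ((hQT.stronglyMeasurable_transition hf (s - 1)).mono (ℱ.mono (Nat.sub_le s 1)))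

theorem integrable_compensatedTerm [IsProbabilityMeasure μ] (hA : ∑ j, (A j)ᴴ * A j = 1)
    (hQT : IsQTraj A μ ℱ ρ X) (hf : Measurable (Function.uncurry f)) {n : ℕ}
    (hint : Integrable (fun ω => f (ρ (n + 1) ω) (increment X (n + 1) ω)) μ) :
    Integrable (compensatedTerm A f ρ X (n + 1)) μ :=
  hint.sub (hQT.integrable_transition hA hf hint)

theorem condExp_compensatedTerm [IsProbabilityMeasure μ] (hA : ∑ j, (A j)ᴴ * A j = 1)
    (hQT : IsQTraj A μ ℱ ρ X) (hf : Measurable (Function.uncurry f)) {n : ℕ}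
    (hint : Integrable (fun ω => f (ρ (n + 1) ω) (increment X (n + 1) ω)) μ) :
    μ[compensatedTerm A f ρ X (n + 1) | ℱ n] =ᵐ[μ] 0 :=
  condExp_sub_ae_eq_zero (ℱ.le n) hint (hQT.stronglyMeasurable_transition hf n)
    (hQT.condExp_ae_eq_transition hA hf hint)

theorem integrable_fPoisson [IsProbabilityMeasure μ] (hA : ∑ j, (A j)ᴴ * A j = 1)
    (hQT : IsQTraj A μ ℱ ρ X) (Ll : Matrix (Fin k) (Fin k) ℂ) (l : Fin d → ℝ) (n : ℕ) :
    Integrable (fun ω => fPoisson Ll l (ρ (n + 1) ω) (increment X (n + 1) ω)) μ := by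
  refine Integrable.of_bound
    ((hQT.stronglyMeasurable_state_increment (measurable_uncurry_fPoisson Ll l) (n + 1)).mono
      (ℱ.le _)).aestronglyMeasurable
    ((∑ i, ∑ j, ‖Ll j i‖) + ∑ i, ‖∑ j, dirR d i j * l j‖) ?_
  filter_upwards [hQT.density (n + 1), hQT.ae_mem_iUnion_jumpEvent hA n] with ω hρ hω
  obtain ⟨i, hi⟩ := Set.mem_iUnion.mp hω
  rw [increment_eq_dirR hi]
  refine (norm_fPoisson_le Ll l hρ _).trans (add_le_add_right ?_ _)
  exact Finset.single_le_sum (f := fun i => ‖∑ j, dirR d i j * l j‖)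
    (fun _ _ => norm_nonneg _) (Finset.mem_univ i)

end IsQTraj

theorem stmt9_general [IsProbabilityMeasure μ] (hA : ∑ j, (A j)ᴴ * A j = 1)
    (hQT : IsQTraj A μ ℱ ρ X) (hf : Measurable (Function.uncurry f))
    (hint : ∀ n, Integrable (fun ω => f (ρ (n + 1) ω) (increment X (n + 1) ω)) μ) (a : ℕ) :
    Martingale (fun n ω => ∑ s ∈ Ioc a n, compensatedTerm A f ρ X s ω) ℱ μ ∧
      ∀ n, ∫ ω, ∑ s ∈ Ioc a n, compensatedTerm A f ρ X s ω ∂μ = 0 := by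
  have hM : Martingale (fun n ω => ∑ s ∈ Ioc a n, compensatedTerm A f ρ X s ω) ℱ μ := by
    simpa only [Finset.sum_fn] using martingale_sum_Ioc_of_condExp_eq_zero
      (hQT.stronglyMeasurable_compensatedTerm hf)
      (fun n => hQT.integrable_compensatedTerm hA hf (hint n))
      (fun n => hQT.condExp_compensatedTerm hA hf (hint n)) a
  exact ⟨hM, fun n => integral_eq_zero_of_martingale hM (Nat.zero_le n) (by ext; simp)⟩

end Trajectory

/-- The process `M_n = Σ_{k=2}^n ( f(ρ_k, ΔX_k) − (Pf)(ρ_{k-1}, ΔX_{k-1}) )`,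
with `f(ρ,x) = Re Tr(ρ L_l) + x·l`, is a centered martingale with respect to `(F_n)`. -/
theorem stmt9 {k d : ℕ} (hd : 1 ≤ d)
    (A : Fin (2 * d) → Matrix (Fin k) (Fin k) ℂ)
    (hA : ∑ j, (A j)ᴴ * A j = 1)
    (ρinf : Matrix (Fin k) (Fin k) ℂ) (hρinf : IsDensity ρinf)
    (hinv : (∑ j, A j * ρinf * (A j)ᴴ) = ρinf)
    (huniq : ∀ σ, IsDensity σ → (∑ j, A j * σ * (A j)ᴴ) = σ → σ = ρinf)
    (l : Fin d → ℝ) (Ll : Matrix (Fin k) (Fin k) ℂ)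
    (hLl : Ll - (∑ i, (A i)ᴴ * Ll * A i) =
      (∑ i, (∑ j, dirR d i j * l j) • ((A i)ᴴ * A i)) -
        (∑ j, mvec A ρinf j * l j) • (1 : Matrix (Fin k) (Fin k) ℂ))
    {Ω : Type} {mΩ : MeasurableSpace Ω} (μ : Measure Ω) [IsProbabilityMeasure μ]
    (ℱ : Filtration ℕ mΩ)
    (ρ : ℕ → Ω → Matrix (Fin k) (Fin k) ℂ) (X : ℕ → Ω → Fin d → ℤ)
    (hQT : IsQTraj A μ ℱ ρ X)
    (M : ℕ → Ω → ℝ)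
    (hM : ∀ n ω, M n ω =
      ∑ s ∈ Finset.Icc 2 n,
        (fPoisson Ll l (ρ s ω) (fun j => ((X s ω j - X (s - 1) ω j : ℤ) : ℝ)) -
          Pf A Ll l (ρ (s - 1) ω))) :
    Martingale M ℱ μ ∧ ∀ n, ∫ ω, M n ω ∂μ = 0 := by
  obtain rfl := funext₂ hM
  -- `Icc 2 n` and `Ioc 1 n`, and `Pf` and `transition`, agree definitionally.
  exact stmt9_general hA hQT (measurable_uncurry_fPoisson Ll l) (hQT.integrable_fPoisson hA Ll l) 1
end
end

section
/- Assume (H1). For i = 1,…,d let L_i be a solution of L_i - L^*(L_i) = Σ_{j=1}^{2d} (e_j·e_i) A_j^* A_j - m_i I, and for l ∈ ℝ^d with coordinates l_1,…,l_d set L_l = Σ_{i=1}^d l_i L_i and Γ_l = Σ_{i=1}^{2d} [ A_i^* A_i (e_i·l − m·l)² + 2 (e_i·l − m·l) A_i^* L_l A_i ]. Then the quadratic form identity Re Tr(ρ_∞ Γ_l) = Σ_{i,j=1}^d l_i l_j C_{ij} holds, where C_{ij} = δ_{ij}( Tr(A_i ρ_∞ A_i^*) + Tr(A_{i+d} ρ_∞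 A_{i+d}^*) ) − m_i m_j + ( Tr(A_i ρ_∞ A_i^* L_j) + Tr(A_j ρ_∞ A_j^* L_i) − Tr(A_{i+d} ρ_∞ A_{i+d}^* L_j) − Tr(A_{j+d} ρ_∞ A_{j+d}^* L_i) ) − ( m_i Tr(ρ_∞ L_j) + m_j Tr(ρ_∞ L_i) ) (real parts of traces being understood). -/
open MeasureTheory Filter Matrix Finset
open scoped ComplexOrder

noncomputable section

/-- The index `i ∈ {1,…,d}` viewed inside `Fin (2d)` (direction `+e_i`). -/
def lo {d : ℕ} (i : Fin d) : Fin (2 * d) := ⟨i, by have := i.isLt; omega⟩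

/-- The index `i + d` viewed inside `Fin (2d)` (direction `-e_i`). -/
def hi {d : ℕ} (i : Fin d) : Fin (2 * d) := ⟨(i : ℕ) + d, by have := i.isLt; omega⟩

/-- The covariance matrix `C` of the Central Limit Theorem. -/
def Cmat {k d : ℕ} (A : Fin (2 * d) → Matrix (Fin k) (Fin k) ℂ)
    (ρinf : Matrix (Fin k) (Fin k) ℂ) (LL : Fin d → Matrix (Fin k) (Fin k) ℂ)
    (i j : Fin d) : ℝ :=
  (if i = j then ((A (lo i) * ρinf * (A (lo i))ᴴ).trace).re
      + ((A (hi i) * ρinf * (A (hi i))ᴴ).trace).re else 0)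
    - mvec A ρinf i * mvec A ρinf j
    + (((A (lo i) * ρinf * (A (lo i))ᴴ * LL j).trace).re
      + ((A (lo j) * ρinf * (A (lo j))ᴴ * LL i).trace).re
      - ((A (hi i) * ρinf * (A (hi i))ᴴ * LL j).trace).re
      - ((A (hi j) * ρinf * (A (hi j))ᴴ * LL i).trace).re)
    - (mvec A ρinf i * ((ρinf * LL j).trace).re
      + mvec A ρinf j * ((ρinf * LL i).trace).re)

/-- The matrix `Γ_l = Σ_i [ (e_i·l − m·l)² A_i^* A_i + 2 (e_i·l − m·l) A_i^* L_l A_i ]`. -/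
def Gammal {k d : ℕ} (A : Fin (2 * d) → Matrix (Fin k) (Fin k) ℂ)
    (ρinf Ll : Matrix (Fin k) (Fin k) ℂ) (l : Fin d → ℝ) : Matrix (Fin k) (Fin k) ℂ :=
  ∑ i, ((((∑ j, dirR d i j * l j) - ∑ j, mvec A ρinf j * l j) ^ 2) • ((A i)ᴴ * A i) +
    (2 * ((∑ j, dirR d i j * l j) - ∑ j, mvec A ρinf j * l j)) • ((A i)ᴴ * Ll * A i))

/-!
Under `ρ`, the step `i` is taken with probability `p i = Tr(A i ρ (A i)ᴴ)`, and by invariance of `ρ`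
the post-step operators `A i ρ (A i)ᴴ` sum to `ρ`. Hence centring the scalar step `c i = v i ⬝ᵥ l`
at its mean `μ` turns `Re Tr(ρ Γ)` into `∑ p i * c i ^ 2 - μ ^ 2`, the variance of the step, plus
twice the covariance of the step with `∑ a, l a • L a`. Both are quadratic in `l`, and polarising
them gives a covariance matrix for an arbitrary finite family of steps `v i`. Each step `± e_a` has
a single nonzero coordinate, which collapses its sums over `i` to the entries of `Cmat`.
-/

section DotProduct

variable {κ R : Type*} [Fintype κ] [CommSemiring R]

theorem dotProduct_mul_dotProduct (x y l : κ → R) :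
    (x ⬝ᵥ l) * (y ⬝ᵥ l) = ∑ a, ∑ b, l a * l b * (x a * y b) := by
  rw [dotProduct, dotProduct, Finset.sum_mul_sum]
  exact Finset.sum_congr rfl fun a _ => Finset.sum_congr rfl fun b _ => by ring

theorem sum_dotProduct_mul_dotProduct {ι : Type*} [Fintype ι] (x y : ι → κ → R) (l : κ → R) :
    ∑ i, (x i ⬝ᵥ l) * (y i ⬝ᵥ l) = ∑ a, ∑ b, l a * l b * ∑ i, x i a * y i b := by
  simp only [dotProduct_mul_dotProduct, Finset.mul_sum]
  rw [Finset.sum_comm]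
  exact Finset.sum_congr rfl fun a _ => Finset.sum_comm

end DotProduct

section ReTracePairing

variable {n : Type*} [Fintype n]

/-- The real bilinear pairing `(ρ, X) ↦ Re Tr(ρ X)`, the mean of the observable `X` in the
(possibly unnormalised) state `ρ`. It is bundled as a bilinear map so that sums and real scalars
move through it by `map_sum` and `map_smul`. -/
def reTracePairing : Matrix n n ℂ →ₗ[ℝ] Matrix n n ℂ →ₗ[ℝ] ℝ :=
  (LinearMap.mul ℝ (Matrix n n ℂ)).compr₂ (Complex.reLm ∘ₗ Matrix.traceLinearMap n ℝ ℂ)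

theorem reTracePairing_apply (ρ X : Matrix n n ℂ) :
    reTracePairing ρ X = ((ρ * X).trace).re := rfl

theorem reTracePairing_conjTranspose_mul_mul (ρ X A : Matrix n n ℂ) :
    reTracePairing ρ (Aᴴ * X * A) = reTracePairing (A * ρ * Aᴴ) X := by
  rw [reTracePairing_apply, reTracePairing_apply, ← Matrix.mul_assoc, Matrix.trace_mul_comm]
  simp only [Matrix.mul_assoc]

theorem reTracePairing_conjTranspose_mul_self (ρ A : Matrix n n ℂ) :
    reTracePairing ρ (Aᴴ * A) = ((A * ρ * Aᴴ).trace).re := by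
  rw [reTracePairing_apply, ← Matrix.mul_assoc, Matrix.trace_mul_cycle]

theorem reTracePairing_sum_smul {κ : Type*} [Fintype κ] (ρ : Matrix n n ℂ) (l : κ → ℝ)
    (L : κ → Matrix n n ℂ) :
    reTracePairing ρ (∑ a, l a • L a) = (fun a => reTracePairing ρ (L a)) ⬝ᵥ l := by
  simp only [map_sum, map_smul, smul_eq_mul, dotProduct, mul_comm]

end ReTracePairing

section FiniteSteps

variable {n ι κ : Type*} [Fintype n]

/-- The probability `Re Tr(A_i ρ A_i^*)` that an open quantum walk with Kraus operators `A` in the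
state `ρ` takes the step `i`. -/
def stepProb (A : ι → Matrix n n ℂ) (ρ : Matrix n n ℂ) (i : ι) : ℝ :=
  ((A i * ρ * (A i)ᴴ).trace).re

variable [Fintype ι]

/-- The mean step of an open quantum walk with finitely many steps `v i`, in the state `ρ`;
`mvec` is the nearest-neighbour case `v = dirR d`. -/
def stepDrift (A : ι → Matrix n n ℂ) (ρ : Matrix n n ℂ) (v : ι → κ → ℝ) : κ → ℝ :=
  fun a => ∑ i, stepProb A ρ i * v i a

/-- The operator `Γ_l` of an open quantum walk with finitely many steps `v i`, where `X` is the
operator `L_l`; `Gammal` is the nearest-neighbour case `v = dirR d`. -/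
def stepGamma [Fintype κ] (A : ι → Matrix n n ℂ) (ρ : Matrix n n ℂ) (v : ι → κ → ℝ)
    (X : Matrix n n ℂ) (l : κ → ℝ) : Matrix n n ℂ :=
  ∑ i, ((v i ⬝ᵥ l - stepDrift A ρ v ⬝ᵥ l) ^ 2 • ((A i)ᴴ * A i) +
    (2 * (v i ⬝ᵥ l - stepDrift A ρ v ⬝ᵥ l)) • ((A i)ᴴ * X * A i))

/-- The covariance matrix of an open quantum walk with finitely many steps `v i`: the covariance of
a single step, plus the symmetrised covariance of the step with the operators `L a`. -/
def stepCov (A : ι → Matrix n n ℂ) (ρ : Matrix n n ℂ) (v : ι → κ → ℝ)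
    (L : κ → Matrix n n ℂ) (a b : κ) : ℝ :=
  ∑ i, stepProb A ρ i * v i a * v i b - stepDrift A ρ v a * stepDrift A ρ v b
    + (∑ i, v i a * reTracePairing (A i * ρ * (A i)ᴴ) (L b)
      + ∑ i, v i b * reTracePairing (A i * ρ * (A i)ᴴ) (L a))
    - (stepDrift A ρ v a * reTracePairing ρ (L b) + stepDrift A ρ v b * reTracePairing ρ (L a))

variable {A : ι → Matrix n n ℂ} {ρ : Matrix n n ℂ}

theorem sum_stepProb_eq_one (hρ : ρ.trace = 1) (hinv : ∑ i, A i * ρ * (A i)ᴴ = ρ) :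
    ∑ i, stepProb A ρ i = 1 := by
  simp only [stepProb]
  rw [← Complex.re_sum, ← Matrix.trace_sum, hinv, hρ, Complex.one_re]

theorem sum_reTracePairing_of_invariant (hinv : ∑ i, A i * ρ * (A i)ᴴ = ρ) (X : Matrix n n ℂ) :
    ∑ i, reTracePairing (A i * ρ * (A i)ᴴ) X = reTracePairing ρ X := by
  rw [← LinearMap.sum_apply, ← map_sum, hinv]

theorem stepDrift_dotProduct [Fintype κ] (A : ι → Matrix n n ℂ) (ρ : Matrix n n ℂ)
    (v : ι → κ → ℝ) (l : κ → ℝ) :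
    stepDrift A ρ v ⬝ᵥ l = ∑ i, stepProb A ρ i * (v i ⬝ᵥ l) := by
  simp only [stepDrift, dotProduct, Finset.sum_mul, Finset.mul_sum, mul_assoc]
  exact Finset.sum_comm

theorem reTracePairing_stepGamma [Fintype κ] (hρ : ρ.trace = 1)
    (hinv : ∑ i, A i * ρ * (A i)ᴴ = ρ) (v : ι → κ → ℝ) (X : Matrix n n ℂ) (l : κ → ℝ) :
    reTracePairing ρ (stepGamma A ρ v X l) =
      ∑ i, stepProb A ρ i * (v i ⬝ᵥ l) ^ 2 - (stepDrift A ρ v ⬝ᵥ l) ^ 2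
        + 2 * (∑ i, (v i ⬝ᵥ l) * reTracePairing (A i * ρ * (A i)ᴴ) X
          - (stepDrift A ρ v ⬝ᵥ l) * reTracePairing ρ X) := by
  have mean_eq := stepDrift_dotProduct A ρ v l
  set μ := stepDrift A ρ v ⬝ᵥ l with hμ
  calc reTracePairing ρ (stepGamma A ρ v X l)
      = ∑ i, ((v i ⬝ᵥ l - μ) ^ 2 * stepProb A ρ i
          + 2 * (v i ⬝ᵥ l - μ) * reTracePairing (A i * ρ * (A i)ᴴ) X) := by
        simp only [stepGamma, map_sum, map_add, map_smul, smul_eq_mul, stepProb, hμ,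
          reTracePairing_conjTranspose_mul_self, reTracePairing_conjTranspose_mul_mul]
    _ = ∑ i, (stepProb A ρ i * (v i ⬝ᵥ l) ^ 2 - 2 * μ * (stepProb A ρ i * (v i ⬝ᵥ l))
          + μ ^ 2 * stepProb A ρ i
          + 2 * ((v i ⬝ᵥ l) * reTracePairing (A i * ρ * (A i)ᴴ) X)
          - 2 * μ * reTracePairing (A i * ρ * (A i)ᴴ) X) :=
        Finset.sum_congr rfl fun i _ => by ring
    _ = _ := by
        simp only [Finset.sum_add_distrib, Finset.sum_sub_distrib, ← Finset.mul_sum, ← mean_eq,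
          sum_stepProb_eq_one hρ hinv, sum_reTracePairing_of_invariant hinv]
        ring

theorem sum_mul_mul_stepCov [Fintype κ] (A : ι → Matrix n n ℂ) (ρ : Matrix n n ℂ)
    (v : ι → κ → ℝ) (L : κ → Matrix n n ℂ) (l : κ → ℝ) :
    ∑ a, ∑ b, l a * l b * stepCov A ρ v L a b =
      ∑ i, stepProb A ρ i * (v i ⬝ᵥ l) ^ 2 - (stepDrift A ρ v ⬝ᵥ l) ^ 2
        + 2 * (∑ i, (v i ⬝ᵥ l) * reTracePairing (A i * ρ * (A i)ᴴ) (∑ a, l a • L a)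
          - (stepDrift A ρ v ⬝ᵥ l) * reTracePairing ρ (∑ a, l a • L a)) := by
  have step_sq : ∑ i, stepProb A ρ i * (v i ⬝ᵥ l) ^ 2 =
      ∑ a, ∑ b, l a * l b * ∑ i, stepProb A ρ i * v i a * v i b := by
    simpa only [smul_dotProduct, Pi.smul_apply, smul_eq_mul, mul_assoc, ← sq] using
      sum_dotProduct_mul_dotProduct (fun i => stepProb A ρ i • v i) v l
  have swap (f : κ → κ → ℝ) :
      ∑ a, ∑ b, l a * l b * f b a = ∑ a, ∑ b, l a * l b * f a b := by
    rw [Finset.sum_comm]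
    simp only [mul_comm]
  simp only [stepCov, mul_add, mul_sub, Finset.sum_add_distrib, Finset.sum_sub_distrib]
  rw [swap fun a b => ∑ i, v i a * reTracePairing (A i * ρ * (A i)ᴴ) (L b),
    swap fun a b => stepDrift A ρ v a * reTracePairing ρ (L b)]
  simp only [reTracePairing_sum_smul]
  rw [step_sq, sum_dotProduct_mul_dotProduct, sq, dotProduct_mul_dotProduct,
    dotProduct_mul_dotProduct]
  ring

theorem stmt12_general [Fintype κ] (hρ : ρ.trace = 1) (hinv : ∑ i, A i * ρ * (A i)ᴴ = ρ)
    (v : ι → κ → ℝ) (L : κ → Matrix n n ℂ) (l : κ → ℝ) :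
    ((ρ * stepGamma A ρ v (∑ a, l a • L a) l).trace).re =
      ∑ a, ∑ b, l a * l b * stepCov A ρ v L a b := by
  rw [← reTracePairing_apply, reTracePairing_stepGamma hρ hinv, sum_mul_mul_stepCov]

end FiniteSteps

section NearestNeighbour

variable {d : ℕ}

theorem sum_eq_sum_lo_add_sum_hi {M : Type*} [AddCommMonoid M] (f : Fin (2 * d) → M) :
    ∑ i, f i = ∑ a, f (lo a) + ∑ a, f (hi a) := by
  rw [← (finCongr (two_mul d).symm).sum_comp f, Fin.sum_univ_add]
  congr! 3 with a _ a _
  exact Fin.ext (add_comm d a)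

theorem dirR_lo (a b : Fin d) : dirR d (lo a) b = if a = b then 1 else 0 := by
  simp [dirR, dir, lo, Fin.ext_iff, eq_comm]

theorem dirR_hi (a b : Fin d) : dirR d (hi a) b = if a = b then -1 else 0 := by
  simp [dirR, dir, hi, Fin.ext_iff, eq_comm]

theorem sum_dirR_mul (f : Fin (2 * d) → ℝ) (a : Fin d) :
    ∑ i, dirR d i a * f i = f (lo a) - f (hi a) := by
  simp [sum_eq_sum_lo_add_sum_hi, dirR_lo, dirR_hi, sub_eq_add_neg]

theorem sum_mul_dirR_mul_dirR (f : Fin (2 * d) → ℝ) (a b : Fin d) :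
    ∑ i, f i * dirR d i a * dirR d i b = if a = b then f (lo a) + f (hi a) else 0 := by
  have dirR_first (i : Fin (2 * d)) :
      f i * dirR d i a * dirR d i b = dirR d i a * (f i * dirR d i b) := by ring
  simp only [dirR_first, sum_dirR_mul, dirR_lo, dirR_hi]
  split_ifs <;> ring

theorem Cmat_eq_stepCov {k : ℕ} (A : Fin (2 * d) → Matrix (Fin k) (Fin k) ℂ)
    (ρ : Matrix (Fin k) (Fin k) ℂ) (L : Fin d → Matrix (Fin k) (Fin k) ℂ) (a b : Fin d) :
    Cmat A ρ L a b = stepCov A ρ (dirR d) L a b := by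
  have drift_eq : stepDrift A ρ (dirR d) = mvec A ρ := rfl
  simp only [Cmat, stepCov, drift_eq, sum_mul_dirR_mul_dirR, sum_dirR_mul, stepProb,
    reTracePairing_apply]
  ring

end NearestNeighbour

/-- The quadratic form identity
`Re Tr(ρ_∞ Γ_l) = Σ_{i,j} l_i l_j C_{ij}`, with `L_l = Σ_i l_i L_i`. -/
theorem stmt12 {k d : ℕ} (hd : 1 ≤ d)
    (A : Fin (2 * d) → Matrix (Fin k) (Fin k) ℂ)
    (hA : ∑ j, (A j)ᴴ * A j = 1)
    (ρinf : Matrix (Fin k) (Fin k) ℂ) (hρinf : IsDensity ρinf)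
    (hinv : (∑ j, A j * ρinf * (A j)ᴴ) = ρinf)
    (huniq : ∀ σ, IsDensity σ → (∑ j, A j * σ * (A j)ᴴ) = σ → σ = ρinf)
    (LL : Fin d → Matrix (Fin k) (Fin k) ℂ)
    (hLL : ∀ i : Fin d,
      LL i - (∑ j, (A j)ᴴ * LL i * A j) =
        (∑ j, dirR d j i • ((A j)ᴴ * A j)) -
          mvec A ρinf i • (1 : Matrix (Fin k) (Fin k) ℂ))
    (l : Fin d → ℝ) (Ll : Matrix (Fin k) (Fin k) ℂ)
    (hLl : Ll = ∑ i, l i • LL i) :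
    ((ρinf * Gammal A ρinf Ll l).trace).re =
      ∑ i, ∑ j, l i * l j * Cmat A ρinf LL i j := by
  simp only [Cmat_eq_stepCov, hLl]
  exact stmt12_general hρinf.2 hinv (dirR d) LL l
end
end
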